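/- For a,b ∈ ℤ[ω] with a ≡ b ≡ 1 (mod 3) and gcd(a,b) = 1, the cubic Gauss sum is twisted multiplicative: g(ab) = conj((a/b)₃) · g(a) · g(b). -/

import Mathlib

open Complex

noncomputable section

/-- The primitive cube root of unity `ω = e^{2πi/3}`. -/
def ω : ℂ := Complex.exp (2 * Real.pi * Complex.I / 3)

/-- The ring of Eisenstein integers `ℤ[ω]`, as a subring of `ℂ`. -/
def Zω : Subring ℂ := Subring.closure {ω}

/-- `ω` as an element of `ℤ[ω]`. -/
def ωZ : Zω := ⟨ω, Subring.subset_closure rfl⟩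

/-- The ramified prime `λ = 1 - ω` of `ℤ[ω]`. -/
def lamZ : Zω := 1 - ωZ

/-- The norm `N(a) = |a|²` from `ℚ(ω)` to `ℚ`, restricted to `ℤ[ω]`. -/
def Nm (a : Zω) : ℝ := Complex.normSq (a : ℂ)

/-- The norm of an Eisenstein integer, as a natural number. -/
def NmNat (a : Zω) : ℕ := ⌊Complex.normSq (a : ℂ)⌋₊

/-- `e(z) = e^{2πi Tr(z)} = e^{2πi (z + z̄)}`. -/
def eE (z : ℂ) : ℂ := Complex.exp (2 * Real.pi * Complex.I * (z + (starRingEnd ℂ) z))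

/-- `χ` is the cubic residue symbol `χ a b = (a/b)₃` on `ℤ[ω]`:
it is multiplicative in both arguments, and at prime moduli `π` coprime to `3`
it is given by the power-residue congruence
`(a/π)₃ ≡ a^{(N(π)-1)/3} (mod π)`, with values among `{1, ω, ω²}` (and `0` when `π ∣ a`). -/
def IsCubicSymbol (χ : Zω → Zω → Zω) : Prop :=
  (∀ a b₁ b₂ : Zω, χ a (b₁ * b₂) = χ a b₁ * χ a b₂) ∧
  (∀ a₁ a₂ b : Zω, χ (a₁ * a₂) b = χ a₁ b * χ a₂ b) ∧
  (∀ a : Zω, χ a 1 = 1) ∧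
  (∀ a π : Zω, Prime π → IsCoprime π 3 →
    (π ∣ a → χ a π = 0) ∧
    (¬ π ∣ a →
      ((χ a π : ℂ) = 1 ∨ (χ a π : ℂ) = ω ∨ (χ a π : ℂ) = ω ^ 2) ∧
      π ∣ (a ^ ((NmNat π - 1) / 3) - χ a π)))

/-- The shifted cubic Gauss sum `g(ν,c) = Σ_{d mod c} (d/c)₃ e(νd/c)`,
relative to a cubic residue symbol `χ`. -/
def gauss (χ : Zω → Zω → Zω) (ν c : Zω) : ℂ :=
  ∑' q : Zω ⧸ Ideal.span {c},
    ((χ (Quotient.out q) c : Zω) : ℂ) * eE (((ν * Quotient.out q : Zω) : ℂ) / (c : ℂ))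

/-- `μ` is the Möbius function of `ℤ[ω]`. -/
def IsMoebiusZω (μ : Zω → ℤ) : Prop :=
  μ 1 = 1 ∧
  (∀ a : Zω, ¬ Squarefree a → μ a = 0) ∧
  (∀ a b : Zω, IsCoprime a b → μ (a * b) = μ a * μ b) ∧
  (∀ π : Zω, Prime π → μ π = -1)

end

/-!
Write the residues modulo `ab` as `d = bx + ay`. Then `d/(ab) = x/a + y/b`, while
`(d/(ab))₃ = (b/a)₃ (a/b)₃ (x/a)₃ (y/b)₃`, so that `g(ab) = (b/a)₃ (a/b)₃ g(a) g(b)`. By cubic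
reciprocity the constant is `(a/b)₃²`, the conjugate of the cube root of unity `(a/b)₃`.

For reciprocity, let `π` be a primary prime. The Jacobi sum `J(χ, χ)` of `χ = (·/π)₃` is divisible
by `π`, has the norm of `π` and is `-1` modulo `3`, hence equals `-π`, and the Gauss sum of `χ` has
cube `-π N(π)`. Evaluating its `N(ρ)`-th power modulo a primary prime `ρ` both through this cube and
through the Frobenius gives `(N(ρ)/π)₃ (π N(π)/ρ)₃ = 1` when `N(π)` and `N(ρ)` are coprime.
Exchanging `π` and `ρ` and dividing yields `(π/ρ)₃ = (ρ/π)₃`. In the remaining case `ρ = π̄`, put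
`t = -(π + π̄)`: it is primary and no prime factor of it is `π` or `π̄`, so
`(π/π̄)₃ = (t/π̄)₃ = (π̄/t)₃ = (π/t)₃ = (t/π)₃ = (π̄/π)₃`.
-/

section FiniteFields

theorem eq_of_pow_eq_one_of_dvd_sub {R : Type*} [CommRing R] [IsDomain R] {π v w : R} {n : ℕ}
    (hπ : ¬IsUnit π) (hπn : IsCoprime π (n : R)) (hv : v ^ n = 1) (hw : w ^ n = 1)
    (h : π ∣ v - w) : v = w := by
  by_contra hne
  have hsum : ∑ i ∈ Finset.range n, v ^ i * w ^ (n - 1 - i) = 0 := by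
    have := (Commute.all v w).geom_sum₂_mul n
    rw [hv, hw, sub_self] at this
    exact (mul_eq_zero.1 this).resolve_right (sub_ne_zero.2 hne)
  have hdvd : π ∣ n * w ^ (n - 1) :=
    (dvd_geom_sum₂_iff_of_dvd_sub h).1 (hsum ▸ dvd_zero π)
  obtain rfl | hn := n.eq_zero_or_pos
  · exact hπ (isCoprime_zero_right.1 (by simpa using hπn))
  have hw' : IsUnit w := IsUnit.of_pow_eq_one hw hn.ne'
  exact hπ (hπn.isUnit_of_dvd' dvd_rfl ((hw'.pow _).dvd_mul_right.1 hdvd))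

theorem mulChar_pow_card {R K : Type*} [CommMonoid R] [Field K] [Fintype K] (χ : MulChar R K) :
    χ ^ Fintype.card K = χ := by
  ext a
  rw [MulChar.pow_apply_coe, FiniteField.pow_card]

theorem orderOf_mulChar_dvd_card_sub_one {R K : Type*} [CommMonoid R] [Field K] [Fintype K]
    (χ : MulChar R K) :
    orderOf χ ∣ Fintype.card K - 1 := by
  refine orderOf_dvd_of_pow_eq_one (mul_right_cancel (b := χ) ?_)
  rw [← pow_succ, Nat.sub_add_cancel Fintype.card_pos, mulChar_pow_card, one_mul]

variable {F : Type*} [Field F] [Fintype F]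

theorem sum_pow_mul_one_sub_pow_eq_zero {m n : ℕ} (h : m + n < Fintype.card F - 1) :
    ∑ x : F, x ^ m * (1 - x) ^ n = 0 := by
  have expand (x : F) : x ^ m * (1 - x) ^ n =
      ∑ k ∈ Finset.range (n + 1), (-1) ^ k * (n.choose k : F) * x ^ (m + k) := by
    rw [sub_eq_neg_add, add_pow, Finset.mul_sum]
    refine Finset.sum_congr rfl fun k _ => ?_
    rw [neg_pow, one_pow]
    ring
  simp only [expand]
  rw [Finset.sum_comm]
  refine Finset.sum_eq_zero fun k hk => ?_
  rw [← Finset.mul_sum, FiniteField.sum_pow_lt_card_sub_one, mul_zero]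
  have := Finset.mem_range.1 hk
  omega

theorem normSq_jacobiSum {χ ψ : MulChar F ℂ} (hχ : χ ≠ 1) (hψ : ψ ≠ 1) (hχψ : χ * ψ ≠ 1) :
    Complex.normSq (jacobiSum χ ψ) = Fintype.card F := by
  have hchar : ringChar ℂ ≠ ringChar F := by
    rw [ringChar.eq_zero]
    exact (CharP.char_ne_zero_of_finite F (ringChar F)).symm
  have hconj : jacobiSum χ⁻¹ ψ⁻¹ = (starRingEnd ℂ) (jacobiSum χ ψ) := by
    simp only [jacobiSum, map_sum, map_mul, ← MulChar.star_apply', RCLike.star_def]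
  have := jacobiSum_mul_jacobiSum_inv hchar hχ hψ hχψ
  rw [hconj, Complex.mul_conj] at this
  exact_mod_cast this

theorem gaussSum_pow_char_pow {R R' : Type*} [CommRing R] [Fintype R] [CommRing R'] (p : ℕ)
    [Fact p.Prime] [CharP R' p] (χ : MulChar R R') (ψ : AddChar R R') (n : ℕ) :
    gaussSum χ ψ ^ p ^ n = gaussSum (χ ^ p ^ n) (ψ ^ p ^ n) := by
  induction n with
  | zero => simp only [pow_zero, pow_one]
  | succ n ih => rw [pow_succ, pow_mul, ih, gaussSum_frob, ← pow_mul, ← pow_mul]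

theorem cast_card_eq_zero_iff_ringChar_eq {K : Type*} [CommRing K] [IsDomain K] :
    (Fintype.card F : K) = 0 ↔ ringChar K = ringChar F := by
  obtain ⟨n, hp, hF⟩ := FiniteField.card F (ringChar F)
  rw [hF, Nat.cast_pow, pow_eq_zero_iff n.ne_zero, ringChar.spec, Nat.dvd_prime hp]
  exact or_iff_right (CharP.ringChar_ne_one (R := K))

variable {K : Type*} [Field K] [Fintype K]

theorem mulChar_card_mul_gaussSum_pow_card {L : Type*} [Field L] [Algebra K L]
    (hK : (Fintype.card K : F) ≠ 0) (χ : MulChar F K) (ψ : AddChar F L) :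
    χ.ringHomComp (algebraMap K L) (Fintype.card K) *
      gaussSum (χ.ringHomComp (algebraMap K L)) ψ ^ Fintype.card K =
        gaussSum (χ.ringHomComp (algebraMap K L)) ψ := by
  obtain ⟨n, hp, hcard⟩ := FiniteField.card K (ringChar K)
  have : Fact (ringChar K).Prime := ⟨hp⟩
  have : CharP L (ringChar K) := charP_of_injective_algebraMap (algebraMap K L).injective _
  have hfrob := gaussSum_pow_char_pow (ringChar K) (χ.ringHomComp (algebraMap K L)) ψ n
  rw [← hcard, MulChar.ringHomComp_pow, mulChar_pow_card, AddChar.pow_mulShift] at hfrob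
  rw [hfrob]
  exact gaussSum_mulShift _ ψ (Units.mk0 _ hK)

theorem mulChar_card_mul_prod_jacobiSum_pow {χ : MulChar F K} (hχ : 2 ≤ orderOf χ)
    (hchar : ringChar K ≠ ringChar F) :
    χ (Fintype.card K) * (χ (-1) * Fintype.card F *
      ∏ i ∈ Finset.Ico 1 (orderOf χ - 1), jacobiSum χ (χ ^ i)) ^
        ((Fintype.card K - 1) / orderOf χ) = 1 := by
  let ψ := AddChar.FiniteField.primitiveChar F K hchar
  let L := CyclotomicField ψ.n K
  have hinj := (algebraMap K L).injective
  let χ' : MulChar F L := χ.ringHomComp (algebraMap K L)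
  let g := gaussSum χ' ψ.char
  have horder : orderOf χ' = orderOf χ := by
    refine orderOf_eq_orderOf_iff.2 fun m => ?_
    rw [MulChar.ringHomComp_pow, MulChar.ringHomComp_eq_one_iff hinj]
  have hg : g ≠ 0 := by
    refine gaussSum_ne_zero_of_nontrivial ?_ ?_ ψ.prim
    · rw [← map_natCast (algebraMap K L)]
      exact (map_ne_zero _).2 (mt cast_card_eq_zero_iff_ringChar_eq.1 hchar)
    · rw [Ne, ← orderOf_eq_one_iff]
      omega
  have hpow : g ^ orderOf χ = algebraMap K L (χ (-1) * Fintype.card F *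
      ∏ i ∈ Finset.Ico 1 (orderOf χ - 1), jacobiSum χ (χ ^ i)) := by
    rw [← horder, gaussSum_pow_eq_prod_jacobiSum (χ := χ') (horder ▸ hχ) ψ.prim, horder]
    simp only [χ', map_mul, map_prod, map_natCast, MulChar.ringHomComp_apply,
      MulChar.ringHomComp_pow, jacobiSum_ringHomComp]
  have hcard : orderOf χ * ((Fintype.card K - 1) / orderOf χ) + 1 = Fintype.card K := by
    rw [Nat.mul_div_cancel' (orderOf_mulChar_dvd_card_sub_one χ),
      Nat.sub_add_cancel Fintype.card_pos]
  apply hinj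
  apply mul_right_cancel₀ hg
  rw [map_mul, map_pow, ← hpow, ← pow_mul, mul_assoc, ← pow_succ, hcard, map_one, one_mul,
    ← χ.ringHomComp_apply]
  exact mulChar_card_mul_gaussSum_pow_card
    (mt cast_card_eq_zero_iff_ringChar_eq.1 hchar.symm) χ ψ.char

end FiniteFields

namespace Zω

section Conjugation

theorem isPrimitiveRoot_omega : IsPrimitiveRoot ωZ 3 :=
  IsPrimitiveRoot.of_map_of_injective (f := Zω.subtype)
    (Complex.isPrimitiveRoot_exp 3 (by norm_num)) Subtype.val_injective

@[simp, norm_cast]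
theorem coe_omega : (ωZ : ℂ) = ω := rfl

theorem omega_sq : ωZ ^ 2 = -1 - ωZ := by
  have h := isPrimitiveRoot_omega.geom_sum_eq_zero (by norm_num)
  simp only [Finset.sum_range_succ, Finset.sum_range_zero] at h
  linear_combination h

theorem coe_omega_sq : ω ^ 2 = -1 - ω := congrArg Subtype.val omega_sq

theorem starRingEnd_eq_sq {z : ℂ} (hz : z ^ 3 = 1) : (starRingEnd ℂ) z = z ^ 2 := by
  rw [← Complex.inv_eq_conj (Complex.norm_eq_one_of_pow_eq_one hz (by norm_num))]
  exact inv_eq_of_mul_eq_one_right (by rw [← hz]; ring)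

theorem omega_pow_three : ω ^ 3 = 1 :=
  congrArg Subtype.val isPrimitiveRoot_omega.pow_eq_one

theorem starRingEnd_omega : (starRingEnd ℂ) ω = -1 - ω := by
  rw [starRingEnd_eq_sq omega_pow_three, coe_omega_sq]

/-- Complex conjugation as an automorphism of `ℤ[ω]`. -/
noncomputable def conj : Zω ≃+* Zω :=
  have hmem : Zω ≤ Zω.comap (starRingEnd ℂ) := by
    refine Subring.closure_le.2 (Set.singleton_subset_iff.2 ?_)
    change (starRingEnd ℂ) ω ∈ Zω
    rw [starRingEnd_omega]
    exact (-1 - ωZ).2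
  let f : Zω →+* Zω := (starRingEnd ℂ).restrict Zω Zω hmem
  have hf : f.comp f = RingHom.id Zω := RingHom.ext fun a => Subtype.ext (Complex.conj_conj (a : ℂ))
  RingEquiv.ofRingHom f f hf hf

@[simp]
theorem coe_conj (a : Zω) : (conj a : ℂ) = (starRingEnd ℂ) (a : ℂ) := rfl

@[simp]
theorem conj_conj (a : Zω) : conj (conj a) = a := Subtype.ext (Complex.conj_conj (a : ℂ))

end Conjugation

section Norm

theorem exists_eq_add_mul_omega (a : Zω) : ∃ x y : ℤ, a = x + y * ωZ := by
  obtain ⟨z, hz⟩ := a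
  simp only [Subtype.ext_iff]
  induction hz using Subring.closure_induction with
  | mem z hz => exact ⟨0, 1, by simpa [ωZ] using hz⟩
  | zero => exact ⟨0, 0, by simp⟩
  | one => exact ⟨1, 0, by simp⟩
  | add z w _ _ hz hw =>
    obtain ⟨⟨x, y, rfl⟩, ⟨x', y', rfl⟩⟩ := And.intro hz hw
    exact ⟨x + x', y + y', by push_cast; ring⟩
  | neg z _ hz =>
    obtain ⟨x, y, rfl⟩ := hz
    exact ⟨-x, -y, by push_cast; ring⟩
  | mul z w _ _ hz hw =>
    obtain ⟨⟨x, y, rfl⟩, ⟨x', y', rfl⟩⟩ := And.intro hz hw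
    refine ⟨x * x' - y * y', x * y' + y * x' - y * y', ?_⟩
    push_cast [coe_omega]
    linear_combination (y * y' : ℂ) * coe_omega_sq

theorem normSq_add_mul_omega (x y : ℝ) : normSq (x + y * ω) = x ^ 2 - x * y + y ^ 2 := by
  rw [← Complex.ofReal_inj, ← Complex.mul_conj, map_add, map_mul, starRingEnd_omega,
    Complex.conj_ofReal, Complex.conj_ofReal]
  push_cast
  linear_combination (-y ^ 2 : ℂ) * coe_omega_sq

theorem coe_NmNat (a : Zω) : (NmNat a : ℝ) = normSq (a : ℂ) := by
  obtain ⟨x, y, rfl⟩ := exists_eq_add_mul_omega a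
  have hxy : normSq ((x + y * ωZ : Zω) : ℂ) = (x ^ 2 - x * y + y ^ 2 : ℤ) := by
    exact_mod_cast normSq_add_mul_omega x y
  obtain ⟨n, hn⟩ := Int.eq_ofNat_of_zero_le (a := x ^ 2 - x * y + y ^ 2)
    (by exact_mod_cast hxy ▸ Complex.normSq_nonneg _)
  rw [NmNat, hxy, hn, Int.cast_natCast, Nat.floor_natCast]

theorem NmNat_mul (a b : Zω) : NmNat (a * b) = NmNat a * NmNat b := by
  rw [← Nat.cast_inj (R := ℝ), Nat.cast_mul, coe_NmNat, coe_NmNat, coe_NmNat, Subring.coe_mul,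
    Complex.normSq_mul]

theorem NmNat_eq_zero {a : Zω} : NmNat a = 0 ↔ a = 0 := by
  rw [← Nat.cast_eq_zero (R := ℝ), coe_NmNat, Complex.normSq_eq_zero, ZeroMemClass.coe_eq_zero]

theorem mul_conj_eq_NmNat (a : Zω) : a * conj a = NmNat a := by
  refine Subtype.ext ?_
  rw [Subring.coe_mul, coe_conj, Complex.mul_conj, ← coe_NmNat, Complex.ofReal_natCast]
  rfl

theorem dvd_NmNat (a : Zω) : a ∣ NmNat a := Dvd.intro _ (mul_conj_eq_NmNat a)

theorem isUnit_iff_NmNat_eq_one {a : Zω} : IsUnit a ↔ NmNat a = 1 := by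
  refine ⟨?_, fun h => IsUnit.of_mul_eq_one (conj a) (by rw [mul_conj_eq_NmNat, h, Nat.cast_one])⟩
  rintro ⟨u, rfl⟩
  have hmul : NmNat u * NmNat (u⁻¹ : Zωˣ) = 1 := by
    rw [← NmNat_mul, Units.mul_inv, NmNat, Subring.coe_one, map_one, Nat.floor_one]
  exact Nat.eq_one_of_mul_eq_one_right hmul

theorem omega_im_ne_zero : ω.im ≠ 0 := by
  intro him
  have hω : (-1 - ωZ : Zω) = ωZ :=
    Subtype.ext (starRingEnd_omega.symm.trans (Complex.conj_eq_iff_im.2 him))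
  have hsq : ωZ ^ 2 = ωZ ^ 1 := by rw [omega_sq, hω, pow_one]
  exact absurd (isPrimitiveRoot_omega.pow_inj (by norm_num) (by norm_num) hsq) (by norm_num)

theorem exists_normSq_sub_lt_one (z : ℂ) : ∃ w : Zω, normSq (z - w) < 1 := by
  obtain ⟨x, y, rfl⟩ : ∃ x y : ℝ, z = x + y * ω := by
    refine ⟨z.re - z.im / ω.im * ω.re, z.im / ω.im, Complex.ext ?_ ?_⟩
    · simp [-Complex.ofReal_div]
    · simp [-Complex.ofReal_div, omega_im_ne_zero]
  refine ⟨round x + round y * ωZ, ?_⟩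
  have hsub : (x + y * ω - (round x + round y * ωZ : Zω) : ℂ) =
      (x - round x : ℝ) + (y - round y : ℝ) * ω := by
    push_cast
    ring
  rw [hsub, normSq_add_mul_omega]
  have hx := abs_le.1 (abs_sub_round x)
  have hy := abs_le.1 (abs_sub_round y)
  nlinarith [hx.1, hx.2, hy.1, hy.2]

theorem exists_NmNat_sub_mul_lt (a : Zω) {b : Zω} (hb : b ≠ 0) :
    ∃ q : Zω, NmNat (a - b * q) < NmNat b := by
  obtain ⟨q, hq⟩ := exists_normSq_sub_lt_one (a / b)
  have hb' : (b : ℂ) ≠ 0 := mt ZeroMemClass.coe_eq_zero.1 hb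
  have hrem : ((a - b * q : Zω) : ℂ) = b * (a / b - q) := by
    push_cast
    field_simp
  refine ⟨q, ?_⟩
  rw [← Nat.cast_lt (α := ℝ), coe_NmNat, coe_NmNat, hrem, Complex.normSq_mul]
  exact mul_lt_of_lt_one_right (Complex.normSq_pos.2 hb') hq

instance : IsPrincipalIdealRing Zω := by
  classical
  choose q hq using fun (a b : Zω) (hb : b ≠ 0) => exists_NmNat_sub_mul_lt a hb
  let quotient (a b : Zω) : Zω := if hb : b = 0 then 0 else q a b hb
  let E : EuclideanDomain Zω :=
    { (inferInstance : CommRing Zω), (inferInstance : Nontrivial Zω) with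
      quotient
      quotient_zero a := dif_pos rfl
      remainder a b := a - b * quotient a b
      quotient_mul_add_remainder_eq a b := add_sub_cancel _ _
      r a b := NmNat a < NmNat b
      r_wellFounded := (measure NmNat).wf
      remainder_lt a b hb := by
        simp only [quotient, dif_neg hb]
        exact hq a b hb
      mul_left_not_lt a b hb := by
        rw [NmNat_mul, not_lt]
        exact Nat.le_mul_of_pos_right _ (Nat.pos_of_ne_zero (mt NmNat_eq_zero.1 hb)) }
  exact @EuclideanDomain.to_principal_ideal_domain Zω E

/-- The integral basis `1, ω` of `ℤ[ω]`. -/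
noncomputable def basis : Module.Basis (Fin 2) ℤ Zω := by
  refine Module.Basis.mk (v := ![1, ωZ]) (LinearIndependent.pair_iff.2 fun x y h => ?_) ?_
  · have hre : (x + y * ω : ℂ) = 0 := by simpa [ωZ] using congrArg Subtype.val h
    have hy : y = 0 := by simpa [omega_im_ne_zero] using congrArg Complex.im hre
    subst hy
    simpa using hre
  · rintro a -
    obtain ⟨x, y, rfl⟩ := exists_eq_add_mul_omega a
    rw [← zsmul_one, ← zsmul_eq_mul]
    exact add_mem (Submodule.smul_mem _ x (Submodule.subset_span ⟨0, rfl⟩))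
      (Submodule.smul_mem _ y (Submodule.subset_span ⟨1, rfl⟩))

instance : Module.Free ℤ Zω := Module.Free.of_basis basis

instance : Module.Finite ℤ Zω := Module.Finite.of_basis basis

theorem natAbs_algebraNorm (a : Zω) : (Algebra.norm ℤ a).natAbs = NmNat a := by
  have hconj : Algebra.norm ℤ (conj a) = Algebra.norm ℤ a :=
    Algebra.norm_eq_of_algEquiv conj.toIntAlgEquiv a
  have hsq : Algebra.norm ℤ a ^ 2 = NmNat a ^ 2 := by
    calc Algebra.norm ℤ a ^ 2 = Algebra.norm ℤ (a * conj a) := by rw [map_mul, hconj, sq]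
      _ = Algebra.norm ℤ (algebraMap ℤ Zω (NmNat a)) := by rw [mul_conj_eq_NmNat]; norm_cast
      _ = NmNat a ^ 2 := by
        rw [Algebra.norm_algebraMap, Module.finrank_eq_card_basis basis, Fintype.card_fin]
  rw [Int.natAbs_eq_iff_sq_eq.2 hsq, Int.natAbs_natCast]

theorem card_quotient_span_singleton (a : Zω) : Nat.card (Zω ⧸ Ideal.span {a}) = NmNat a := by
  rw [← natAbs_algebraNorm, ← Ideal.absNorm_span_singleton]
  rfl

theorem finite_quotient_span_singleton {a : Zω} (ha : a ≠ 0) :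
    Finite (Zω ⧸ Ideal.span {a}) :=
  Nat.finite_of_card_ne_zero (by rwa [card_quotient_span_singleton, Ne, NmNat_eq_zero])

end Norm

section Primary

/-- An Eisenstein integer is primary if it is congruent to `1` modulo `3`. -/
def IsPrimary (a : Zω) : Prop := 3 ∣ a - 1

theorem eq_zero_of_three_dvd {z : Zω} (h : 3 ∣ z) (hz : ‖(z : ℂ)‖ < 3) : z = 0 := by
  obtain ⟨w, rfl⟩ := h
  have hnorm : ‖((3 * w : Zω) : ℂ)‖ = 3 * ‖(w : ℂ)‖ := by
    rw [Subring.coe_mul, norm_mul]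
    exact congrArg (· * _) (RCLike.norm_ofNat 3)
  have hw : (NmNat w : ℝ) < (1 : ℕ) := by
    rw [coe_NmNat, Complex.normSq_eq_norm_sq, Nat.cast_one]
    exact pow_lt_one₀ (norm_nonneg _) (by linarith) two_ne_zero
  rw [NmNat_eq_zero.1 (Nat.lt_one_iff.1 (Nat.cast_lt.1 hw)), mul_zero]

theorem not_isUnit_three : ¬IsUnit (3 : Zω) := by
  intro h
  exact one_ne_zero (eq_zero_of_three_dvd h.dvd (by norm_num))

theorem norm_eq_one_of_isUnit {u : Zω} (hu : IsUnit u) : ‖(u : ℂ)‖ = 1 := by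
  have h := coe_NmNat u
  rw [isUnit_iff_NmNat_eq_one.1 hu, Nat.cast_one, Complex.normSq_eq_norm_sq] at h
  exact (pow_eq_one_iff_of_nonneg (norm_nonneg _) two_ne_zero).1 h.symm

namespace IsPrimary

variable {a b : Zω}

theorem one : IsPrimary 1 := ⟨0, by ring⟩

theorem mul (ha : IsPrimary a) (hb : IsPrimary b) : IsPrimary (a * b) := by
  have h : a * b - 1 = (a - 1) * b + (b - 1) := by ring
  rw [IsPrimary, h]
  exact dvd_add (Dvd.dvd.mul_right ha b) hb

theorem of_mul_left (ha : IsPrimary a) (hab : IsPrimary (a * b)) : IsPrimary b := by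
  have h : b - 1 = (a * b - 1) - (a - 1) * b := by ring
  rw [IsPrimary, h]
  exact dvd_sub hab (Dvd.dvd.mul_right ha b)

theorem neg_add (ha : IsPrimary a) (hb : IsPrimary b) : IsPrimary (-(a + b)) := by
  have h : -(a + b) - 1 = -(a - 1) - (b - 1) - 3 := by ring
  rw [IsPrimary, h]
  exact dvd_sub (dvd_sub (dvd_neg.2 ha) hb) dvd_rfl

theorem conj (ha : IsPrimary a) : IsPrimary (conj a) := by
  have h := map_dvd Zω.conj ha
  rwa [map_sub, map_one, map_ofNat] at h

theorem isCoprime_three (ha : IsPrimary a) : IsCoprime a 3 := by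
  obtain ⟨w, hw⟩ := ha
  exact ⟨1, -w, by linear_combination hw⟩

theorem ne_zero (ha : IsPrimary a) : a ≠ 0 := by
  rintro rfl
  exact not_isUnit_three (isCoprime_zero_left.1 ha.isCoprime_three)

theorem eq_one_of_isUnit (ha : IsPrimary a) (hu : IsUnit a) : a = 1 := by
  refine sub_eq_zero.1 (eq_zero_of_three_dvd ha ?_)
  calc ‖((a - 1 : Zω) : ℂ)‖ ≤ ‖(a : ℂ)‖ + ‖(1 : ℂ)‖ := norm_sub_le _ _
    _ < 3 := by rw [norm_eq_one_of_isUnit hu, norm_one]; norm_num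

theorem eq_of_associated (ha : IsPrimary a) (hb : IsPrimary b) (h : Associated a b) : a = b := by
  obtain ⟨u, rfl⟩ := h
  rw [(ha.of_mul_left hb).eq_one_of_isUnit u.isUnit, mul_one]

theorem isCoprime_of_ne (ha : IsPrimary a) (hb : IsPrimary b) (hpa : Prime a) (hpb : Prime b)
    (hne : a ≠ b) : IsCoprime a b := by
  refine hpa.irreducible.coprime_iff_not_dvd.2 fun hdvd => hne (ha.eq_of_associated hb ?_)
  exact hpa.irreducible.associated_of_dvd hpb.irreducible hdvd

end IsPrimary

theorem lamZ_sq : lamZ ^ 2 = -(3 * ωZ) := by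
  rw [lamZ]
  linear_combination omega_sq

theorem three_dvd_omega_pow_sub (n : ℕ) : 3 ∣ ωZ ^ n - (1 - n * lamZ) := by
  induction n with
  | zero => simp
  | succ n ih =>
    have h : ωZ ^ (n + 1) - (1 - (n + 1 : ℕ) * lamZ) =
        ωZ * (ωZ ^ n - (1 - n * lamZ)) + 3 * (-n * ωZ) := by
      have hω : ωZ = 1 - lamZ := by rw [lamZ]; ring
      push_cast
      linear_combination (1 - n * lamZ) * hω + n * lamZ_sq
    exact h ▸ dvd_add (ih.mul_left _) (dvd_mul_right _ _)

theorem exists_isUnit_isPrimary_mul {p : Zω} (hp : IsCoprime p 3) :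
    ∃ u : Zω, IsUnit u ∧ IsPrimary (u * p) := by
  obtain ⟨x, y, rfl⟩ := exists_eq_add_mul_omega p
  have hp_eq : (x + y * ωZ : Zω) = (x + y : ℤ) - y * lamZ := by
    rw [lamZ]
    push_cast
    ring
  rw [hp_eq] at hp ⊢
  have hs : ¬3 ∣ x + y := by
    rintro ⟨k, hk⟩
    refine not_isUnit_three (hp.pow_left (m := 2) |>.isUnit_of_dvd' ?_ dvd_rfl)
    refine ⟨3 * k ^ 2 - 2 * k * y * lamZ - y ^ 2 * ωZ, ?_⟩
    rw [hk]
    push_cast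
    linear_combination y ^ 2 * lamZ_sq
  -- Put `s = x + y`. Modulo `3` we have `λ² ≡ 0` and `ωⁿ ≡ 1 - nλ`, whence
  -- `ωⁿ(s - yλ) ≡ s - (ns + y)λ`; so take a sign `ε ≡ s` and then `n ≡ -εy`.
  obtain ⟨ε, k, hε, hk⟩ : ∃ ε k : ℤ, ε ^ 2 = 1 ∧ x + y = ε + 3 * k := by
    obtain h | h : (x + y) % 3 = 1 ∨ (x + y) % 3 = 2 := by omega
    · exact ⟨1, (x + y) / 3, by norm_num, by omega⟩
    · exact ⟨-1, (x + y) / 3 + 1, by norm_num, by omega⟩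
  obtain ⟨n, j, hn⟩ : ∃ (n : ℕ) (j : ℤ), n + ε * y = 3 * j :=
    ⟨(-(ε * y) % 3).toNat, -(-(ε * y) / 3), by omega⟩
  obtain ⟨w, hw⟩ := three_dvd_omega_pow_sub n
  refine ⟨ε * ωZ ^ n, ?_, ε * k * ωZ ^ n + w * (1 - ε * y * lamZ) - j * lamZ - n * ε * y * ωZ, ?_⟩
  · have hεu : IsUnit (ε : Zω) := (IsUnit.of_pow_eq_one hε two_ne_zero).map (Int.castRingHom Zω)
    exact hεu.mul ((isPrimitiveRoot_omega.isUnit (by norm_num)).pow n)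
  · have hε' : (ε : Zω) ^ 2 = 1 := by exact_mod_cast hε
    have hn' : (n + ε * y : Zω) = 3 * j := by exact_mod_cast hn
    rw [hk]
    push_cast
    linear_combination ωZ ^ n * hε' + (1 - ε * y * lamZ) * hw - lamZ * hn' + n * ε * y * lamZ_sq

@[elab_as_elim]
theorem IsPrimary.induction {P : (c : Zω) → IsPrimary c → Prop} (one : P 1 IsPrimary.one)
    (mul : ∀ π c, Prime π → ∀ (hπ : IsPrimary π) (hc : IsPrimary c), P c hc →
      P (π * c) (hπ.mul hc)) {c : Zω} (hc : IsPrimary c) : P c hc := by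
  suffices h : ∀ u, IsUnit u → ∀ h : IsPrimary (u * c), P (u * c) h by
    simpa only [one_mul] using h 1 isUnit_one ((one_mul c).symm ▸ hc)
  clear hc
  induction c using WfDvdMonoid.induction_on_irreducible with
  | zero => exact fun u _ h => absurd (mul_zero u) h.ne_zero
  | unit c hc =>
    intro u hu h
    have huc := h.eq_one_of_isUnit (hu.mul hc)
    simpa only [huc] using one
  | mul c p _ hp ih =>
    intro u hu h
    have hp3 : IsCoprime p 3 := h.isCoprime_three.of_mul_left_right.of_mul_left_left
    obtain ⟨_, ⟨v, rfl⟩, hvp⟩ := exists_isUnit_isPrimary_mul hp3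
    have hfactor : u * (p * c) = v * p * (↑v⁻¹ * u * c) := by
      linear_combination -(u * p * c) * v.mul_inv
    have hc : IsPrimary (↑v⁻¹ * u * c) := hvp.of_mul_left (hfactor ▸ h)
    have hvp' := ((irreducible_units_mul v).2 hp).prime
    simpa only [hfactor] using mul _ _ hvp' hvp hc (ih _ (v⁻¹.isUnit.mul hu) hc)

end Primary

section ResidueField

/-- The residue field `ℤ[ω]/(π)` at a prime `π`. -/
abbrev ResidueField (π : Zω) : Type := Zω ⧸ Ideal.span {π}

/-- Reduction modulo `π`. -/
abbrev residue (π : Zω) : Zω →+* ResidueField π := Ideal.Quotient.mk (Ideal.span {π})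

theorem residue_eq_zero_iff {π x : Zω} : residue π x = 0 ↔ π ∣ x :=
  Ideal.Quotient.eq_zero_iff_mem.trans Ideal.mem_span_singleton

theorem residue_eq_iff {π x y : Zω} : residue π x = residue π y ↔ π ∣ x - y :=
  Ideal.Quotient.eq.trans Ideal.mem_span_singleton

variable {π : Zω} [hprime : Fact (Prime π)]

instance : (Ideal.span {π}).IsMaximal :=
  PrincipalIdealRing.isMaximal_of_irreducible hprime.out.irreducible

noncomputable instance : Field (ResidueField π) := Ideal.Quotient.field _

noncomputable instance : Fintype (ResidueField π) :=
  have := finite_quotient_span_singleton hprime.out.ne_zero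
  Fintype.ofFinite _

theorem card_residueField : Fintype.card (ResidueField π) = NmNat π := by
  rw [← Nat.card_eq_fintype_card, card_quotient_span_singleton]

theorem three_dvd_card_residueField_sub_one (h3 : IsCoprime π 3) :
    3 ∣ Fintype.card (ResidueField π) - 1 := by
  have hpow : residue π ωZ ^ 3 = 1 := by
    rw [← map_pow, isPrimitiveRoot_omega.pow_eq_one, map_one]
  have hne : residue π ωZ ≠ 1 := by
    rw [← map_one (residue π), Ne, residue_eq_iff]
    exact fun h => isPrimitiveRoot_omega.ne_one (by norm_num) <|
      eq_of_pow_eq_one_of_dvd_sub hprime.out.not_isUnit (by exact_mod_cast h3)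
        isPrimitiveRoot_omega.pow_eq_one (one_pow 3) h
  rw [← orderOf_eq_prime hpow hne]
  refine orderOf_dvd_of_pow_eq_one (FiniteField.pow_card_sub_one_eq_one _ fun h => ?_)
  rw [h, zero_pow three_ne_zero] at hpow
  exact zero_ne_one hpow

theorem card_residueField_sub_one_pos : 0 < Fintype.card (ResidueField π) - 1 :=
  Nat.sub_pos_of_lt Fintype.one_lt_card

end ResidueField

end Zω

namespace IsCubicSymbol

open Zω

variable {χ : Zω → Zω → Zω} (hχ : IsCubicSymbol χ)

section Symbol

include hχ

theorem mul_right (a b c : Zω) : χ a (b * c) = χ a b * χ a c := hχ.1 a b c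

theorem mul_left (a b c : Zω) : χ (a * b) c = χ a c * χ b c := hχ.2.1 a b c

theorem one_right (a : Zω) : χ a 1 = 1 := hχ.2.2.1 a

theorem eq_zero_of_dvd {π a : Zω} (hπ : Prime π) (h3 : IsCoprime π 3) (h : π ∣ a) : χ a π = 0 :=
  (hχ.2.2.2 a π hπ h3).1 h

theorem pow_three_of_prime {π a : Zω} (hπ : Prime π) (h3 : IsCoprime π 3) (h : ¬π ∣ a) :
    χ a π ^ 3 = 1 := by
  obtain h | h | h := ((hχ.2.2.2 a π hπ h3).2 h).1 <;> refine Subtype.ext ?_ <;>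
    rw [Subring.coe_pow, h, Subring.coe_one]
  · exact one_pow 3
  · exact omega_pow_three
  · rw [pow_right_comm, omega_pow_three, one_pow]

theorem residue_apply {π : Zω} [hprime : Fact (Prime π)] (h3 : IsCoprime π 3) (a : Zω) :
    residue π (χ a π) = residue π a ^ ((Fintype.card (ResidueField π) - 1) / 3) := by
  by_cases h : π ∣ a
  · have := three_dvd_card_residueField_sub_one h3
    have := card_residueField_sub_one_pos (π := π)
    rw [hχ.eq_zero_of_dvd hprime.out h3 h, residue_eq_zero_iff.2 h, map_zero, zero_pow (by omega)]
  · rw [card_residueField, ← map_pow, eq_comm, residue_eq_iff]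
    exact ((hχ.2.2.2 a π hprime.out h3).2 h).2

theorem congr_of_prime {π a b : Zω} (hπ : Prime π) (h3 : IsCoprime π 3) (h : π ∣ a - b) :
    χ a π = χ b π := by
  by_cases ha : π ∣ a
  · rw [hχ.eq_zero_of_dvd hπ h3 ha, hχ.eq_zero_of_dvd hπ h3 ((dvd_iff_dvd_of_dvd_sub h).1 ha)]
  have hb : ¬π ∣ b := mt (dvd_iff_dvd_of_dvd_sub h).2 ha
  have : Fact (Prime π) := ⟨hπ⟩
  refine eq_of_pow_eq_one_of_dvd_sub hπ.not_isUnit (by exact_mod_cast h3)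
    (hχ.pow_three_of_prime hπ h3 ha) (hχ.pow_three_of_prime hπ h3 hb) ?_
  rw [← residue_eq_iff, hχ.residue_apply h3, hχ.residue_apply h3, residue_eq_iff.2 h]

theorem congr {a b c : Zω} (hc : IsPrimary c) (h : c ∣ a - b) : χ a c = χ b c := by
  induction hc using IsPrimary.induction with
  | one => rw [hχ.one_right, hχ.one_right]
  | mul π c hπ hπ' _ ih =>
    rw [hχ.mul_right, hχ.mul_right, ih (dvd_of_mul_left_dvd h),
      hχ.congr_of_prime hπ hπ'.isCoprime_three (dvd_of_mul_right_dvd h)]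

theorem pow_three {a c : Zω} (hc : IsPrimary c) (h : IsCoprime a c) : χ a c ^ 3 = 1 := by
  induction hc using IsPrimary.induction with
  | one => rw [hχ.one_right, one_pow]
  | mul π c hπ hπ' _ ih =>
    have hdvd : ¬π ∣ a := fun hd => hπ.not_isUnit (h.of_mul_right_left.isUnit_of_dvd' hd dvd_rfl)
    rw [hχ.mul_right, mul_pow, ih h.of_mul_right_right,
      hχ.pow_three_of_prime hπ hπ'.isCoprime_three hdvd, one_mul]

theorem cube_left {a c : Zω} (hc : IsPrimary c) (h : IsCoprime a c) : χ (a ^ 3) c = 1 := by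
  rw [← hχ.pow_three hc h, pow_three', pow_three', hχ.mul_left, hχ.mul_left]

theorem one_left {c : Zω} (hc : IsPrimary c) : χ 1 c = 1 := by
  simpa only [one_pow] using hχ.cube_left hc isCoprime_one_left

theorem neg_left {c : Zω} (hc : IsPrimary c) (a : Zω) : χ (-a) c = χ a c := by
  have h := hχ.cube_left hc isCoprime_one_left.neg_left
  rw [Odd.neg_one_pow (by decide)] at h
  rw [neg_eq_neg_one_mul, hχ.mul_left, h, one_mul]

end Symbol

section CubicCharacter

variable {π : Zω} [hprime : Fact (Prime π)] (hπ : IsPrimary π)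

/-- The character `x ↦ (x/π)₃` of the residue field at a primary prime `π`. -/
noncomputable def cubicChar : MulChar (ResidueField π) Zω where
  toFun x := Quotient.liftOn' x (χ · π) fun _ _ h =>
    hχ.congr hπ (Ideal.mem_span_singleton.1 ((Submodule.quotientRel_def _).1 h))
  map_one' := hχ.one_left hπ
  map_mul' x y := Quotient.inductionOn₂' x y fun a b => hχ.mul_left a b π
  map_nonunit' x := by
    induction x using Quotient.inductionOn' with
    | h a =>
      intro ha
      refine hχ.eq_zero_of_dvd hprime.out hπ.isCoprime_three (residue_eq_zero_iff.1 ?_)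
      exact not_ne_iff.1 (mt (IsUnit.mk0 _) ha)

theorem cubicChar_residue (a : Zω) : hχ.cubicChar hπ (residue π a) = χ a π := rfl

theorem residue_cubicChar (x : ResidueField π) :
    residue π (hχ.cubicChar hπ x) = x ^ ((Fintype.card (ResidueField π) - 1) / 3) := by
  obtain ⟨a, rfl⟩ := Ideal.Quotient.mk_surjective x
  exact hχ.residue_apply hπ.isCoprime_three a

theorem cubicChar_pow_three_apply {x : ResidueField π} (hx : x ≠ 0) :
    hχ.cubicChar hπ x ^ 3 = 1 := by
  obtain ⟨a, rfl⟩ := Ideal.Quotient.mk_surjective x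
  exact hχ.pow_three_of_prime hprime.out hπ.isCoprime_three (mt residue_eq_zero_iff.2 hx)

theorem cubicChar_pow_three : hχ.cubicChar hπ ^ 3 = 1 := by
  ext x
  rw [MulChar.pow_apply_coe, MulChar.one_apply_coe, hχ.cubicChar_pow_three_apply hπ x.ne_zero]

theorem cubicChar_ne_one : hχ.cubicChar hπ ≠ 1 := by
  intro h
  have hdvd : Fintype.card (ResidueField π) - 1 ∣ (Fintype.card (ResidueField π) - 1) / 3 := by
    refine (FiniteField.forall_pow_eq_one_iff (ResidueField π) _).1 fun x => Units.ext ?_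
    rw [Units.val_pow_eq_pow_val, ← hχ.residue_cubicChar hπ, h, MulChar.one_apply_coe, map_one,
      Units.val_one]
  have := three_dvd_card_residueField_sub_one hπ.isCoprime_three
  have := card_residueField_sub_one_pos (π := π)
  have := Nat.le_of_dvd (by omega) hdvd
  omega

theorem cubicChar_mul_self_ne_one : hχ.cubicChar hπ * hχ.cubicChar hπ ≠ 1 := by
  intro h
  have hpow := hχ.cubicChar_pow_three hπ
  rw [pow_succ, sq, h, one_mul] at hpow
  exact hχ.cubicChar_ne_one hπ hpow

theorem dvd_jacobiSum_cubicChar : π ∣ jacobiSum (hχ.cubicChar hπ) (hχ.cubicChar hπ) := by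
  rw [← residue_eq_zero_iff, jacobiSum, map_sum]
  simp only [map_mul, residue_cubicChar]
  refine sum_pow_mul_one_sub_pow_eq_zero ?_
  have := three_dvd_card_residueField_sub_one hπ.isCoprime_three
  have := card_residueField_sub_one_pos (π := π)
  omega

theorem NmNat_jacobiSum_cubicChar :
    NmNat (jacobiSum (hχ.cubicChar hπ) (hχ.cubicChar hπ)) = NmNat π := by
  have hinj : Function.Injective Zω.subtype := Subtype.val_injective
  have hne := (MulChar.ringHomComp_ne_one_iff hinj).2 (hχ.cubicChar_ne_one hπ)
  have hsq := (MulChar.ringHomComp_ne_one_iff hinj).2 (hχ.cubicChar_mul_self_ne_one hπ)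
  rw [MulChar.ringHomComp_mul] at hsq
  have hnorm := normSq_jacobiSum hne hne hsq
  rw [jacobiSum_ringHomComp, card_residueField] at hnorm
  rw [← Nat.cast_inj (R := ℝ), coe_NmNat]
  exact hnorm

theorem isPrimary_neg_jacobiSum_cubicChar :
    IsPrimary (-jacobiSum (hχ.cubicChar hπ) (hχ.cubicChar hπ)) := by
  obtain ⟨z, -, hz⟩ := exists_jacobiSum_eq_neg_one_add (by norm_num) (hχ.cubicChar_pow_three hπ)
    (hχ.cubicChar_pow_three hπ) (three_dvd_card_residueField_sub_one hπ.isCoprime_three)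
    isPrimitiveRoot_omega
  refine ⟨ωZ * z, ?_⟩
  rw [hz]
  linear_combination -z * omega_sq

theorem jacobiSum_cubicChar : jacobiSum (hχ.cubicChar hπ) (hχ.cubicChar hπ) = -π := by
  obtain ⟨u, hu⟩ := hχ.dvd_jacobiSum_cubicChar hπ
  have hnorm := hχ.NmNat_jacobiSum_cubicChar hπ
  rw [hu, NmNat_mul] at hnorm
  have hunit : IsUnit u := isUnit_iff_NmNat_eq_one.2 <|
    Nat.eq_of_mul_eq_mul_left (Nat.pos_of_ne_zero (mt NmNat_eq_zero.1 hprime.out.ne_zero))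
      (hnorm.trans (mul_one _).symm)
  refine neg_eq_iff_eq_neg.1 (hχ.isPrimary_neg_jacobiSum_cubicChar hπ |>.eq_of_associated hπ ?_)
  rw [hu]
  exact (associated_mul_unit_left π u hunit).neg_left

end CubicCharacter

section Reciprocity

include hχ

theorem orderOf_cubicChar_ringHomComp_residue {π ρ : Zω} [Fact (Prime π)] (hπ : IsPrimary π)
    (hρ : ¬IsUnit ρ) (h3 : IsCoprime ρ 3) :
    orderOf ((hχ.cubicChar hπ).ringHomComp (residue ρ)) = 3 := by
  refine orderOf_eq_prime ?_ fun h => hχ.cubicChar_ne_one hπ (MulChar.ext fun x => ?_)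
  · rw [MulChar.ringHomComp_pow, hχ.cubicChar_pow_three, MulChar.ringHomComp_one]
  · rw [MulChar.one_apply_coe]
    refine eq_of_pow_eq_one_of_dvd_sub hρ (by exact_mod_cast h3)
      (hχ.cubicChar_pow_three_apply hπ x.ne_zero) (one_pow 3) (residue_eq_iff.1 ?_)
    rw [← MulChar.ringHomComp_apply, h, MulChar.one_apply_coe, map_one]

theorem residue_apply_NmNat_mul_apply {π ρ : Zω} [Fact (Prime π)] [hρ : Fact (Prime ρ)]
    (hπ' : IsPrimary π) (hρ' : IsPrimary ρ) (h : IsCoprime (NmNat π : Zω) ρ) :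
    residue ρ (χ (NmNat ρ) π * χ (π * NmNat π) ρ) = 1 := by
  have hchar : ringChar (ResidueField ρ) ≠ ringChar (ResidueField π) := by
    rw [Ne, ← cast_card_eq_zero_iff_ringChar_eq, card_residueField, ← map_natCast (residue ρ),
      residue_eq_zero_iff]
    exact fun hdvd => hρ.out.not_isUnit (h.isUnit_of_dvd' hdvd dvd_rfl)
  let θ := (hχ.cubicChar hπ').ringHomComp (residue ρ)
  have hθ (a : Zω) : θ (residue π a) = residue ρ (χ a π) :=
    congrArg (residue ρ) (hχ.cubicChar_residue hπ' a)
  have hcard : θ (NmNat ρ) = residue ρ (χ (NmNat ρ) π) := by rw [← hθ, map_natCast (residue π)]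
  have hneg : θ (-1) = 1 := by
    rw [← map_one (residue π), ← map_neg, hθ, hχ.neg_left hπ', hχ.one_left hπ', map_one]
  have hjacobi : jacobiSum θ θ = -residue ρ π := by
    rw [jacobiSum_ringHomComp, hχ.jacobiSum_cubicChar hπ', map_neg]
  have horder : orderOf θ = 3 :=
    hχ.orderOf_cubicChar_ringHomComp_residue hπ' hρ.out.not_isUnit hρ'.isCoprime_three
  have hone := mulChar_card_mul_prod_jacobiSum_pow (χ := θ) (by omega) hchar
  rw [horder, show Finset.Ico 1 (3 - 1) = {1} from rfl, Finset.prod_singleton, pow_one, hneg,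
    hjacobi, card_residueField (π := π), one_mul] at hone
  rw [map_mul, ← hcard, ← hχ.neg_left hρ', hχ.residue_apply hρ'.isCoprime_three, ← hone,
    card_residueField, map_neg, map_mul, map_natCast (residue ρ), mul_comm (residue ρ π), mul_neg]

theorem apply_NmNat_mul_apply_eq_one {π ρ : Zω} (hπ : Prime π) (hρ : Prime ρ) (hπ' : IsPrimary π)
    (hρ' : IsPrimary ρ) (h : IsCoprime (NmNat π : Zω) (NmNat ρ : Zω)) :
    χ (NmNat ρ) π * χ (π * NmNat π) ρ = 1 := by
  have : Fact (Prime π) := ⟨hπ⟩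
  have : Fact (Prime ρ) := ⟨hρ⟩
  have hleft : IsCoprime π (NmNat ρ : Zω) := h.of_isCoprime_of_dvd_left (dvd_NmNat π)
  have hright : IsCoprime (NmNat π : Zω) ρ := h.of_isCoprime_of_dvd_right (dvd_NmNat ρ)
  have hπρ : IsCoprime π ρ := hleft.of_isCoprime_of_dvd_right (dvd_NmNat ρ)
  refine eq_of_pow_eq_one_of_dvd_sub hρ.not_isUnit (by exact_mod_cast hρ'.isCoprime_three) ?_
    (one_pow 3) (residue_eq_iff.1 ?_)
  · rw [mul_pow, hχ.pow_three hπ' hleft.symm, hχ.pow_three hρ' (hπρ.mul_left hright), one_mul]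
  · rw [hχ.residue_apply_NmNat_mul_apply hπ' hρ' hright, map_one]

theorem comm_of_prime_of_isCoprime {π ρ : Zω} (hπ : Prime π) (hρ : Prime ρ) (hπ' : IsPrimary π)
    (hρ' : IsPrimary ρ) (h : IsCoprime (NmNat π : Zω) (NmNat ρ : Zω)) : χ π ρ = χ ρ π := by
  have hπρ := hχ.apply_NmNat_mul_apply_eq_one hπ hρ hπ' hρ' h
  have hρπ := hχ.apply_NmNat_mul_apply_eq_one hρ hπ hρ' hπ' h.symm
  rw [hχ.mul_left] at hπρ hρπ
  linear_combination χ ρ π * hπρ - χ π ρ * hρπ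

theorem comm_of_prime_of_ne_conj {π ρ : Zω} (hπ : Prime π) (hρ : Prime ρ) (hπ' : IsPrimary π)
    (hρ' : IsPrimary ρ) (hne : π ≠ ρ) (hconj : π ≠ conj ρ) : χ π ρ = χ ρ π := by
  have hcπ : Prime (conj π) := (MulEquiv.prime_iff conj).2 hπ
  have hcρ : Prime (conj ρ) := (MulEquiv.prime_iff conj).2 hρ
  have hconj' : conj π ≠ ρ := fun h => hconj (by rw [← h, conj_conj])
  refine hχ.comm_of_prime_of_isCoprime hπ hρ hπ' hρ' ?_
  rw [← mul_conj_eq_NmNat, ← mul_conj_eq_NmNat]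
  refine .mul_left (.mul_right ?_ ?_) (.mul_right ?_ ?_)
  · exact hπ'.isCoprime_of_ne hρ' hπ hρ hne
  · exact hπ'.isCoprime_of_ne hρ'.conj hπ hcρ hconj
  · exact hπ'.conj.isCoprime_of_ne hρ' hcπ hρ hconj'
  · exact hπ'.conj.isCoprime_of_ne hρ'.conj hcπ hcρ (conj.injective.ne hne)

theorem comm_of_forall_prime_dvd {a c : Zω} (ha : IsPrimary a) (hc : IsPrimary c)
    (h : ∀ ρ, Prime ρ → IsPrimary ρ → ρ ∣ c → χ a ρ = χ ρ a) : χ a c = χ c a := by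
  induction hc using IsPrimary.induction with
  | one => rw [hχ.one_right, hχ.one_left ha]
  | mul π c hπ hπ' _ ih =>
    rw [hχ.mul_right, hχ.mul_left, h π hπ hπ' (dvd_mul_right π c),
      ih fun ρ hρ hρ' hd => h ρ hρ hρ' (hd.mul_left π)]

theorem comm_neg_add_conj {π : Zω} (hπ : Prime π) (hπ' : IsPrimary π) (hne : π ≠ conj π) :
    χ π (-(π + conj π)) = χ (-(π + conj π)) π := by
  have hcop : IsCoprime π (conj π) :=
    hπ'.isCoprime_of_ne hπ'.conj hπ ((MulEquiv.prime_iff conj).2 hπ) hne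
  refine hχ.comm_of_forall_prime_dvd hπ' (hπ'.neg_add hπ'.conj) fun σ hσ hσ' hd => ?_
  rw [dvd_neg] at hd
  refine hχ.comm_of_prime_of_ne_conj hπ hσ hπ' hσ' ?_ ?_
  · rintro rfl
    exact hσ.not_isUnit (hcop.isUnit_of_dvd' dvd_rfl ((dvd_add_right dvd_rfl).1 hd))
  · rintro rfl
    rw [conj_conj] at hcop hd
    exact hσ.not_isUnit (hcop.isUnit_of_dvd' ((dvd_add_left dvd_rfl).1 hd) dvd_rfl)

theorem comm_conj_of_prime {π : Zω} (hπ : Prime π) (hπ' : IsPrimary π) (hne : π ≠ conj π) :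
    χ π (conj π) = χ (conj π) π := by
  have hconj := hχ.comm_neg_add_conj ((MulEquiv.prime_iff conj).2 hπ) hπ'.conj
    (conj.injective.ne hne)
  rw [conj_conj, add_comm] at hconj
  have hmod {c x y : Zω} (hc : IsPrimary c) (h : c ∣ x + y) : χ x c = χ y c := by
    rw [← hχ.neg_left hc y]
    exact hχ.congr hc (by rwa [sub_neg_eq_add])
  have ht := hπ'.neg_add hπ'.conj
  calc χ π (conj π) = χ (-(π + conj π)) (conj π) := hmod hπ'.conj ⟨-1, by ring⟩
    _ = χ (conj π) (-(π + conj π)) := hconj.symm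
    _ = χ π (-(π + conj π)) := hmod ht ⟨-1, by ring⟩
    _ = χ (-(π + conj π)) π := hχ.comm_neg_add_conj hπ hπ' hne
    _ = χ (conj π) π := hmod hπ' ⟨-1, by ring⟩

theorem comm_of_prime {π ρ : Zω} (hπ : Prime π) (hρ : Prime ρ) (hπ' : IsPrimary π)
    (hρ' : IsPrimary ρ) : χ π ρ = χ ρ π := by
  by_cases hne : π = ρ
  · rw [hne]
  by_cases hconj : π = conj ρ
  · subst hconj
    exact (hχ.comm_conj_of_prime hρ hρ' (Ne.symm hne)).symm
  · exact hχ.comm_of_prime_of_ne_conj hπ hρ hπ' hρ' hne hconj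

theorem reciprocity {a b : Zω} (ha : IsPrimary a) (hb : IsPrimary b) : χ a b = χ b a :=
  hχ.comm_of_forall_prime_dvd ha hb fun _ hρ hρ' _ => .symm <|
    hχ.comm_of_forall_prime_dvd hρ' ha fun _ hσ hσ' _ => hχ.comm_of_prime hρ hσ hρ' hσ'

end Reciprocity

end IsCubicSymbol

section ChineseRemainder

theorem bijective_mk_mul_out_add_mul_out {R : Type*} [CommRing R] {a b : R} (hab : IsCoprime a b) :
    Function.Bijective fun p : (R ⧸ Ideal.span {a}) × (R ⧸ Ideal.span {b}) =>
      Ideal.Quotient.mk (Ideal.span {a * b}) (b * p.1.out + a * p.2.out) := by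
  have hmk {c x y : R} : Ideal.Quotient.mk (Ideal.span {c}) x = Ideal.Quotient.mk _ y ↔
      c ∣ x - y := Ideal.Quotient.eq.trans Ideal.mem_span_singleton
  have hout {c : R} (q : R ⧸ Ideal.span {c}) : Ideal.Quotient.mk (Ideal.span {c}) q.out = q :=
    Quotient.out_eq q
  constructor
  · rintro ⟨x, y⟩ ⟨x', y'⟩ h
    obtain ⟨k, hk⟩ := hmk.1 h
    have hx : a ∣ b * (x.out - x'.out) :=
      ⟨b * k - (y.out - y'.out), by linear_combination hk⟩
    have hy : b ∣ a * (y.out - y'.out) :=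
      ⟨a * k - (x.out - x'.out), by linear_combination hk⟩
    rw [Prod.mk_inj, ← hout x, ← hout x', ← hout y, ← hout y', hmk, hmk]
    exact ⟨hab.dvd_of_dvd_mul_left hx, hab.symm.dvd_of_dvd_mul_left hy⟩
  · intro q
    obtain ⟨d, rfl⟩ := Ideal.Quotient.mk_surjective q
    obtain ⟨u, v, huv⟩ := hab
    obtain ⟨s, hs⟩ := hmk.1 (hout (Ideal.Quotient.mk (Ideal.span {a}) (v * d)))
    obtain ⟨t, ht⟩ := hmk.1 (hout (Ideal.Quotient.mk (Ideal.span {b}) (u * d)))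
    refine ⟨(Ideal.Quotient.mk _ (v * d), Ideal.Quotient.mk _ (u * d)), hmk.2 ⟨s + t, ?_⟩⟩
    linear_combination b * hs + a * ht + d * huv

end ChineseRemainder

section GaussSum

open Zω

theorem eE_add (z w : ℂ) : eE (z + w) = eE z * eE w := by
  rw [eE, eE, eE, ← Complex.exp_add, map_add]
  ring_nf

theorem eE_coe (k : Zω) : eE k = 1 := by
  obtain ⟨x, y, rfl⟩ := exists_eq_add_mul_omega k
  refine Complex.exp_eq_one_iff.2 ⟨2 * x - y, ?_⟩
  push_cast
  simp only [map_add, map_mul, map_intCast, starRingEnd_omega]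
  ring

/-- The summand `(d/c)₃ e(νd/c)` of the Gauss sum `g(ν,c)`. -/
noncomputable def gaussTerm (χ : Zω → Zω → Zω) (ν c d : Zω) : ℂ :=
  χ d c * eE ((ν * d : Zω) / c)

namespace IsCubicSymbol

variable {χ : Zω → Zω → Zω} (hχ : IsCubicSymbol χ)

include hχ

theorem gaussTerm_congr (ν : Zω) {c d d' : Zω} (hc : IsPrimary c) (h : c ∣ d - d') :
    gaussTerm χ ν c d = gaussTerm χ ν c d' := by
  have hc0 : (c : ℂ) ≠ 0 := mt ZeroMemClass.coe_eq_zero.1 hc.ne_zero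
  rw [gaussTerm, gaussTerm, hχ.congr hc h]
  obtain ⟨k, hk⟩ := h
  obtain rfl := eq_add_of_sub_eq' hk
  have harg : ((ν * (d' + c * k) : Zω) : ℂ) / c = (ν * d' : Zω) / c + (ν * k : Zω) := by
    push_cast
    field_simp
  rw [harg, eE_add, eE_coe, mul_one]

theorem gaussTerm_mul (ν : Zω) {a b : Zω} (ha : IsPrimary a) (hb : IsPrimary b) (x y : Zω) :
    gaussTerm χ ν (a * b) (b * x + a * y) =
      χ b a * χ a b * (gaussTerm χ ν a x * gaussTerm χ ν b y) := by
  have ha0 : (a : ℂ) ≠ 0 := mt ZeroMemClass.coe_eq_zero.1 ha.ne_zero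
  have hb0 : (b : ℂ) ≠ 0 := mt ZeroMemClass.coe_eq_zero.1 hb.ne_zero
  have hsymbol : χ (b * x + a * y) (a * b) = χ b a * χ x a * (χ a b * χ y b) := by
    rw [hχ.mul_right, hχ.congr ha ⟨y, add_sub_cancel_left (b * x) (a * y)⟩,
      hχ.congr hb ⟨x, add_sub_cancel_right (b * x) (a * y)⟩, hχ.mul_left, hχ.mul_left]
  have harg : ((ν * (b * x + a * y) : Zω) : ℂ) / (a * b : Zω) =
      (ν * x : Zω) / a + (ν * y : Zω) / b := by
    push_cast
    field_simp
  rw [gaussTerm, gaussTerm, gaussTerm, hsymbol, harg, eE_add]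
  push_cast
  ring

theorem gauss_mul (ν : Zω) {a b : Zω} (ha : IsPrimary a) (hb : IsPrimary b)
    (hab : IsCoprime a b) :
    gauss χ ν (a * b) = χ b a * χ a b * (gauss χ ν a * gauss χ ν b) := by
  have := finite_quotient_span_singleton ha.ne_zero
  have := finite_quotient_span_singleton hb.ne_zero
  let := Fintype.ofFinite (Zω ⧸ Ideal.span {a})
  let := Fintype.ofFinite (Zω ⧸ Ideal.span {b})
  let crt := Equiv.ofBijective _ (bijective_mk_mul_out_add_mul_out hab)
  calc gauss χ ν (a * b)
    _ = ∑' q : Zω ⧸ Ideal.span {a * b}, gaussTerm χ ν (a * b) q.out := rfl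
    _ = ∑' p : (Zω ⧸ Ideal.span {a}) × (Zω ⧸ Ideal.span {b}),
          gaussTerm χ ν (a * b) (b * p.1.out + a * p.2.out) := by
      rw [← crt.tsum_eq]
      refine tsum_congr fun p => hχ.gaussTerm_congr ν (ha.mul hb) (residue_eq_iff.1 ?_)
      exact Quotient.out_eq (crt p)
    _ = χ b a * χ a b * (gauss χ ν a * gauss χ ν b) := by
      simp only [hχ.gaussTerm_mul ν ha hb]
      rw [tsum_mul_left, gauss, gauss, tsum_fintype, tsum_fintype, tsum_fintype,
        Finset.sum_mul_sum, Fintype.sum_prod_type]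
      rfl

end IsCubicSymbol

end GaussSum

theorem gauss_twisted_mul_general (χ : Zω → Zω → Zω) (hχ : IsCubicSymbol χ) (ν a b : Zω)
    (ha : Zω.IsPrimary a) (hb : Zω.IsPrimary b) (hab : IsCoprime a b) :
    gauss χ ν (a * b) = (starRingEnd ℂ) (χ a b : ℂ) * gauss χ ν a * gauss χ ν b := by
  have hcube : (χ a b : ℂ) ^ 3 = 1 := congrArg Subtype.val (hχ.pow_three hb hab)
  rw [hχ.gauss_mul ν ha hb hab, hχ.reciprocity hb ha, ← sq, ← Zω.starRingEnd_eq_sq hcube,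
    mul_assoc]

open Complex in
/-- twisted multiplicativity of the cubic Gauss sum:
for `a ≡ b ≡ 1 (mod 3)` coprime, `g(ab) = conj((a/b)₃) g(a) g(b)`. -/
theorem gauss_twisted_mul (χ : Zω → Zω → Zω) (hχ : IsCubicSymbol χ)
    (a b : Zω) (ha : (3 : Zω) ∣ (a - 1)) (hb : (3 : Zω) ∣ (b - 1))
    (hab : IsCoprime a b) :
    gauss χ 1 (a * b) = (starRingEnd ℂ) ((χ a b : Zω) : ℂ) * gauss χ 1 a * gauss χ 1 b :=
  gauss_twisted_mul_general χ hχ 1 a b ha hb hab
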